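/- arXiv:1504.06783 — 2 statements merged into one kernel-verified Lean document; each statement's English description precedes it below -/
import Mathlib

section
/- Let A be a Noetherian local ring which is a module-finite algebra over a Noetherian local ring R. Then A is a sequentially Cohen-Macaulay local ring if and only if A is a sequentially Cohen-Macaulay R-module. -/
open IsLocalRing

/-- The (Krull) dimension of a module: `dim_R M = dim (R / ann_R M)`;
the zero module has dimension `⊥` (i.e. `-∞`). -/
noncomputable def moduleDim (R : Type*) [CommRing R] (M : Type*) [AddCommGroup M]
    [Module R M] : WithBot ℕ∞ :=
  ringKrullDim (R ⧸ Module.annihilator R M)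

/-- `dimLe d n` means `d ≤ n` where `n : ℤ` and `d` is a dimension in `WithBot ℕ∞`
(so for `n < 0` this means `d = ⊥`, i.e. the module is zero). -/
def dimLe (d : WithBot ℕ∞) (n : ℤ) : Prop :=
  if 0 ≤ n then d ≤ ((n.toNat : ℕ∞) : WithBot ℕ∞) else d = ⊥

/-- The depth of a module over a Noetherian local ring: the supremum of lengths of
regular sequences on `M` contained in the maximal ideal. -/
noncomputable def moduleDepth (R : Type*) [CommRing R] [IsLocalRing R] (M : Type*)
    [AddCommGroup M] [Module R M] : ℕ∞ :=
  sSup {n : ℕ∞ | ∃ rs : List R, (rs.length : ℕ∞) = n ∧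
    (∀ r ∈ rs, r ∈ maximalIdeal R) ∧ RingTheory.Sequence.IsRegular M rs}

/-- A module over a Noetherian local ring is Cohen-Macaulay if it is zero or
`depth M = dim M`. -/
def IsCMModule (R : Type*) [CommRing R] [IsLocalRing R] (M : Type*) [AddCommGroup M]
    [Module R M] : Prop :=
  Nontrivial M → (moduleDepth R M : WithBot ℕ∞) = moduleDim R M

/-- A module over a (not necessarily local) commutative ring is Cohen-Macaulay if all its
localizations at primes are Cohen-Macaulay. -/
def IsCMModuleGen (R : Type*) [CommRing R] (M : Type*) [AddCommGroup M] [Module R M] : Prop :=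
  ∀ (P : Ideal R) [P.IsPrime],
    IsCMModule (Localization.AtPrime P) (LocalizedModule P.primeCompl M)

/-- `D : Fin (ℓ+1) → Submodule R M` is the dimension filtration of `M`:
`D 0 = 0`, `D ℓ = M`, the chain is strictly increasing, each `D i` (for `i ≥ 1`) is the
largest submodule of its dimension, and every nonzero submodule which is largest among
submodules of dimension at most its own dimension occurs in the chain. -/
def IsDimFiltration (R : Type*) [CommRing R] (M : Type*) [AddCommGroup M] [Module R M]
    (ℓ : ℕ) (D : Fin (ℓ + 1) → Submodule R M) : Prop :=
  D 0 = ⊥ ∧ D (Fin.last ℓ) = ⊤ ∧ StrictMono D ∧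
  (∀ i : Fin ℓ, IsGreatest
    {N : Submodule R M | moduleDim R ↥N ≤ moduleDim R ↥(D i.succ)} (D i.succ)) ∧
  (∀ N : Submodule R M, N ≠ ⊥ →
    IsGreatest {N' : Submodule R M | moduleDim R ↥N' ≤ moduleDim R ↥N} N → ∃ i, D i = N)

/-- A module over a local ring is sequentially Cohen-Macaulay if the consecutive quotients
of its dimension filtration are Cohen-Macaulay. -/
def IsSeqCM (R : Type*) [CommRing R] [IsLocalRing R] (M : Type*) [AddCommGroup M]
    [Module R M] : Prop :=
  ∃ (ℓ : ℕ) (D : Fin (ℓ + 1) → Submodule R M), IsDimFiltration R M ℓ D ∧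
    ∀ i : Fin ℓ, IsCMModule R
      (↥(D i.succ) ⧸ (D i.castSucc).comap (D i.succ).subtype)

/-- Sequentially Cohen-Macaulay over a not necessarily local ring. -/
def IsSeqCMGen (R : Type*) [CommRing R] (M : Type*) [AddCommGroup M] [Module R M] : Prop :=
  ∃ (ℓ : ℕ) (D : Fin (ℓ + 1) → Submodule R M), IsDimFiltration R M ℓ D ∧
    ∀ i : Fin ℓ, IsCMModuleGen R
      (↥(D i.succ) ⧸ (D i.castSucc).comap (D i.succ).subtype)

/-- A local ring is sequentially Cohen-Macaulay if it is so as a module over itself. -/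
def IsSeqCMRing (R : Type*) [CommRing R] [IsLocalRing R] : Prop := IsSeqCM R R

/-!
Let `M` be an `A`-module which is finite over `R`. Two facts show that sequential
Cohen-Macaulayness does not depend on which of the two rings acts.

The dimension and the depth of `M` agree over `R` and `A`. For the dimension, `A ⧸ ann M` embeds in
`End_R M`, so it is integral over `R ⧸ ann M`. For the depth, suppose that the maximal ideal of `A`
contains an `M`-regular element, but that the maximal ideal of `R` does not. Then some nonzero
`u : M` is killed by the maximal ideal of `R`. An associated prime of `M` containing `ann_A u` lies
over the maximal ideal of `R`, so integrality makes it the maximal ideal of `A`, which then consists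
of zero divisors on `M`: a contradiction. A regular sequence over `A` can now be traded, one element
at a time, for one coming from `R`: by Rees's theorem, dividing `M` by any regular element of the
maximal ideal lowers the attainable lengths by at most one.

The dimension filtration of `M` over `R` consists of `A`-submodules: an `R`-submodule `N` and its
`A`-span have the same annihilator in `R`, hence the same dimension, so a submodule that is largest
of its dimension equals its span.
-/

section Annihilator

variable (R A M : Type*) [CommRing R] [CommRing A] [Algebra R A] [AddCommGroup M] [Module A M]
  [Module R M] [IsScalarTower R A M] [Module.Finite R M]

theorem isIntegral_quotient_annihilator : Algebra.IsIntegral R (A ⧸ Module.annihilator A M) := by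
  have hker : Module.annihilator A M = RingHom.ker (Algebra.lsmul R R M : A →ₐ[R] _) := by
    ext a
    simp [Module.mem_annihilator, LinearMap.ext_iff]
  rw [hker]
  exact .of_injective (Ideal.kerLiftAlg _) (Ideal.kerLiftAlg_injective _)

variable {A} in
theorem isMaximal_of_isMaximal_comap_of_annihilator_le {P : Ideal A} [P.IsPrime]
    (hann : Module.annihilator A M ≤ P) (hP : (P.comap (algebraMap R A)).IsMaximal) :
    P.IsMaximal := by
  have := isIntegral_quotient_annihilator R A M
  have : Algebra.IsIntegral R (A ⧸ P) :=
    .of_surjective (Ideal.Quotient.factorₐ R hann) (Ideal.Quotient.factor_surjective hann)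
  rw [← Ideal.bot_quotient_isMaximal_iff]
  refine Ideal.isMaximal_of_isIntegral_of_isMaximal_comap (R := R) _ ?_
  rwa [IsScalarTower.algebraMap_eq R A (A ⧸ P), ← Ideal.comap_comap, Ideal.Quotient.algebraMap_eq,
    ← RingHom.ker_eq_comap_bot, Ideal.mk_ker]

end Annihilator

section Dimension

theorem ringKrullDim_eq_of_isIntegral_of_injective {R A : Type*} [CommRing R] [CommRing A]
    [Algebra R A] [Algebra.IsIntegral R A] (hinj : Function.Injective (algebraMap R A)) :
    ringKrullDim A = ringKrullDim R := by
  refine le_antisymm ?_ (iSup_le fun l ↦ ?_)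
  · exact Order.krullDim_le_of_strictMono (PrimeSpectrum.comap (algebraMap R A)) fun P Q hPQ ↦
      Ideal.IsIntegral.comap_lt_comap (R := R) (I := P.asIdeal) (J := Q.asIdeal) hPQ
  · obtain ⟨P, -, hP, hPl⟩ := Ideal.exists_ideal_over_prime_of_isIntegral
      (S := A) l.head.asIdeal ⊥ (by
        rw [← RingHom.ker_eq_comap_bot, (RingHom.injective_iff_ker_eq_bot _).1 hinj]
        exact bot_le)
    have : P.LiesOver l.head.asIdeal := ⟨hPl.symm⟩
    obtain ⟨L, hL, -⟩ := Ideal.exists_ltSeries_of_hasGoingUp l P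
    exact hL ▸ Order.LTSeries.length_le_krullDim L

theorem moduleDim_eq_of_finite (R A M : Type*) [CommRing R] [CommRing A] [Algebra R A]
    [AddCommGroup M] [Module A M] [Module R M] [IsScalarTower R A M] [Module.Finite R M] :
    moduleDim R M = moduleDim A M := by
  have := isIntegral_quotient_annihilator R A M
  unfold moduleDim
  rw [← Module.comap_annihilator (R := A)]
  have : Algebra.IsIntegral (R ⧸ (Module.annihilator A M).comap (algebraMap R A))
      (A ⧸ Module.annihilator A M) := .tower_top R
  exact (ringKrullDim_eq_of_isIntegral_of_injective Ideal.algebraMap_quotient_injective).symm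

theorem moduleDim_congr {R M N : Type*} [CommRing R] [AddCommGroup M] [Module R M]
    [AddCommGroup N] [Module R N] (e : M ≃ₗ[R] N) : moduleDim R M = moduleDim R N := by
  unfold moduleDim
  rw [e.annihilator_eq]

end Dimension

section RegularSequence

open RingTheory.Sequence CategoryTheory Abelian

universe u v

theorem subsingleton_ext_quotSMulTop {A : Type u} [CommRing A] [Small.{v} A]
    {N M : ModuleCat.{v} A} {r : A} (hr : IsSMulRegular M r) {i : ℕ}
    (h₀ : Subsingleton (Ext N M i)) (h₁ : Subsingleton (Ext N M (i + 1))) :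
    Subsingleton (Ext N (ModuleCat.of A (QuotSMulTop r M)) i) := by
  have hzero₀ := AddCommGrpCat.isZero_of_iff_subsingleton.mpr h₀
  have hzero₁ := AddCommGrpCat.isZero_of_iff_subsingleton.mpr h₁
  exact AddCommGrpCat.subsingleton_of_isZero <| ShortComplex.Exact.isZero_of_both_zeros
    (Ext.covariant_sequence_exact₃' N hr.smulShortComplex_shortExact i (i + 1) rfl)
    (hzero₀.eq_zero_of_src _) (hzero₁.eq_zero_of_tgt _)

theorem exists_isRegular_iff_subsingleton_ext {A : Type u} [CommRing A] [IsNoetherianRing A]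
    [IsLocalRing A] [Small.{v} A] (M : ModuleCat.{v} A) [Module.Finite A M] [Nontrivial M] (n : ℕ) :
    (∃ rs : List A, rs.length = n ∧ (∀ r ∈ rs, r ∈ maximalIdeal A) ∧ IsRegular M rs) ↔
      ∀ i < n, Subsingleton (Ext (ModuleCat.of A (Shrink.{v} (A ⧸ maximalIdeal A))) M i) :=
  have hne : ⊤ ≠ maximalIdeal A • (⊤ : Submodule A M) :=
    Submodule.top_ne_ideal_smul_of_le_jacobson_annihilator (maximalIdeal_le_jacobson _)
  (ModuleCat.exists_isRegular_tfae (maximalIdeal A) n M hne.symm.lt_top).out 3 1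

theorem exists_isRegular_quotSMulTop {A : Type u} [CommRing A] [IsNoetherianRing A]
    [IsLocalRing A] {M : Type v} [AddCommGroup M] [Module A M] [Module.Finite A M] {r x : A}
    {xs : List A} (hrm : r ∈ maximalIdeal A) (hr : IsSMulRegular M r)
    (hxm : ∀ y ∈ x :: xs, y ∈ maximalIdeal A) (hx : IsRegular M (x :: xs)) :
    ∃ ys : List A, ys.length = xs.length ∧ (∀ y ∈ ys, y ∈ maximalIdeal A) ∧
      IsRegular (QuotSMulTop r M) ys := by
  have := hx.nontrivial
  -- `Ext` over `A` requires `A` to be small in the universe of the modules.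
  let e : M ≃ₗ[A] ULift.{u} M := ULift.moduleEquiv.symm
  let M' : ModuleCat.{max u v} A := ModuleCat.of A (ULift.{u} M)
  have hr' : IsSMulRegular M' r := (e.isSMulRegular_congr r).1 hr
  have : Nontrivial (QuotSMulTop r M') := nontrivial_quotSMulTop_of_mem_maximalIdeal _ hrm
  have hext := (exists_isRegular_iff_subsingleton_ext M' (xs.length + 1)).1
    ⟨x :: xs, rfl, hxm, (e.isRegular_congr _).1 hx⟩
  obtain ⟨ys, hlen, hym, hys⟩ :=
    (exists_isRegular_iff_subsingleton_ext (ModuleCat.of A (QuotSMulTop r M')) xs.length).2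
      fun i hi ↦ subsingleton_ext_quotSMulTop hr' (hext i (by lia)) (hext (i + 1) (by lia))
  exact ⟨ys, hlen, hym, ((QuotSMulTop.congr r e).isRegular_congr ys).2 hys⟩

theorem isRegular_map_algebraMap_iff {R A M : Type*} [CommRing R] [CommRing A] [Algebra R A]
    [AddCommGroup M] [Module A M] [Module R M] [IsScalarTower R A M] (rs : List R) :
    IsRegular M (rs.map (algebraMap R A)) ↔ IsRegular M rs :=
  (AddEquiv.refl M).isRegular_congr <| List.forall₂_map_left_iff.mpr <|
    List.forall₂_same.mpr fun r _ ↦ algebraMap_smul A r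

end RegularSequence

section Depth

open RingTheory.Sequence

theorem algebraMap_mem_maximalIdeal {R : Type*} (A M : Type*) [CommRing R] [IsLocalRing R]
    [CommRing A] [IsLocalRing A] [Algebra R A] [AddCommGroup M] [Module A M] [Module R M]
    [IsScalarTower R A M] [Module.Finite R M] [Nontrivial M] {r : R} (hr : r ∈ maximalIdeal R) :
    algebraMap R A r ∈ maximalIdeal A := by
  rw [mem_maximalIdeal, mem_nonunits_iff]
  intro hunit
  obtain ⟨b, hb⟩ := hunit.exists_right_inv
  refine Submodule.top_ne_pointwise_smul_of_mem_jacobson_annihilator (M := M)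
    (maximalIdeal_le_jacobson _ hr) (eq_top_iff.2 fun u _ ↦ ?_).symm
  have hu : r • b • u = u := by rw [← algebraMap_smul A, smul_smul, hb, one_smul]
  exact hu ▸ Submodule.smul_mem_pointwise_smul _ r ⊤ trivial

variable {R A : Type*} [CommRing R] [IsNoetherianRing R] [IsLocalRing R] [CommRing A]
  [IsNoetherianRing A] [IsLocalRing A] [Algebra R A]

theorem exists_mem_maximalIdeal_isSMulRegular {M : Type*} [AddCommGroup M] [Module A M]
    [Module R M] [IsScalarTower R A M] [Module.Finite R M] {x : A} (hxm : x ∈ maximalIdeal A)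
    (hx : IsSMulRegular M x) :
    ∃ r ∈ maximalIdeal R, IsSMulRegular M r := by
  suffices hhom : Subsingleton ((R ⧸ maximalIdeal R) →ₗ[R] M) by
    simpa only [Ideal.annihilator_quotient] using IsSMulRegular.subsingleton_linearMap_iff.1 hhom
  refine subsingleton_of_forall_eq 0 fun f ↦ ?_
  by_contra hf
  have hf1 : f 1 ≠ 0 := fun h ↦ hf <| by ext; simpa using h
  obtain ⟨P, hP, hle⟩ := exists_le_isAssociatedPrime_of_isNoetherianRing A (f 1) hf1
  have := hP.isPrime
  have hmP : maximalIdeal R ≤ P.comap (algebraMap R A) := fun r hr ↦ hle <| by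
    have hr1 : r • (1 : R ⧸ maximalIdeal R) = 0 := by
      rwa [Algebra.smul_def, mul_one, Ideal.Quotient.algebraMap_eq, Ideal.Quotient.eq_zero_iff_mem]
    rw [Submodule.mem_colon_singleton, algebraMap_smul, ← map_smul, hr1, map_zero]
    exact zero_mem _
  have hPmax : P.IsMaximal := by
    refine isMaximal_of_isMaximal_comap_of_annihilator_le R M
      (Submodule.annihilator_top (R := A) (M := M) ▸ hP.annihilator_le) ?_
    rw [← (maximalIdeal.isMaximal R).eq_of_le (Ideal.comap_ne_top _ hP.isPrime.ne_top) hmP]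
    exact maximalIdeal.isMaximal R
  have hxP : x ∈ ⋃ p ∈ associatedPrimes A M, (p : Set A) :=
    Set.mem_biUnion hP (eq_maximalIdeal hPmax ▸ hxm)
  rw [biUnion_associatedPrimes_eq_compl_regular A M] at hxP
  exact hxP hx

theorem exists_isRegular_map_algebraMap {n : ℕ} {M : Type*} [AddCommGroup M] [Module A M]
    [Module R M] [IsScalarTower R A M] [Module.Finite R M] {xs : List A} (hlen : xs.length = n)
    (hxm : ∀ x ∈ xs, x ∈ maximalIdeal A) (hxs : IsRegular M xs) :
    ∃ rs : List R, rs.length = n ∧ (∀ r ∈ rs, r ∈ maximalIdeal R) ∧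
      IsRegular M (rs.map (algebraMap R A)) := by
  induction n generalizing M xs with
  | zero =>
    have := hxs.nontrivial
    exact ⟨[], rfl, by simp, .nil A M⟩
  | succ n ih =>
    obtain ⟨x, xs, rfl⟩ := List.exists_cons_of_length_eq_add_one hlen
    have := hxs.nontrivial
    have : Module.Finite A M := .of_restrictScalars_finite R A M
    obtain ⟨r, hrm, hr⟩ := exists_mem_maximalIdeal_isSMulRegular (R := R)
      (hxm x List.mem_cons_self) ((isRegular_cons_iff _ _ _).1 hxs).1
    replace hr := (isSMulRegular_algebraMap_iff (A := A)).2 hr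
    obtain ⟨ys, hyl, hym, hys⟩ :=
      exists_isRegular_quotSMulTop (algebraMap_mem_maximalIdeal A M hrm) hr hxm hxs
    obtain ⟨rs, hrl, hrsm, hrs⟩ := ih (hyl.trans (by simpa using hlen)) hym hys
    exact ⟨r :: rs, by simpa using hrl, by simpa using ⟨hrm, hrsm⟩, hrs.cons hr⟩

variable (R A) in
theorem moduleDepth_eq_of_finite (M : Type*) [AddCommGroup M] [Module A M] [Module R M]
    [IsScalarTower R A M] [Module.Finite R M] : moduleDepth R M = moduleDepth A M := by
  unfold moduleDepth
  congr 1
  ext n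
  constructor
  · rintro ⟨rs, rfl, hm, hrs⟩
    have := hrs.nontrivial
    exact ⟨rs.map (algebraMap R A), by simp,
      by simpa using fun r hr ↦ algebraMap_mem_maximalIdeal A M (hm r hr),
      (isRegular_map_algebraMap_iff rs).2 hrs⟩
  · rintro ⟨xs, rfl, hm, hxs⟩
    obtain ⟨rs, hlen, hrm, hrs⟩ := exists_isRegular_map_algebraMap (R := R) rfl hm hxs
    exact ⟨rs, by rw [hlen], hrm, (isRegular_map_algebraMap_iff rs).1 hrs⟩

theorem moduleDepth_congr {R M N : Type*} [CommRing R] [IsLocalRing R] [AddCommGroup M]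
    [Module R M] [AddCommGroup N] [Module R N] (e : M ≃ₗ[R] N) :
    moduleDepth R M = moduleDepth R N := by
  unfold moduleDepth
  simp only [e.isRegular_congr]

end Depth

section CohenMacaulay

theorem isCMModule_congr {R M N : Type*} [CommRing R] [IsLocalRing R] [AddCommGroup M]
    [Module R M] [AddCommGroup N] [Module R N] (e : M ≃ₗ[R] N) :
    IsCMModule R M ↔ IsCMModule R N := by
  unfold IsCMModule
  rw [moduleDim_congr e, moduleDepth_congr e, e.toEquiv.nontrivial_congr]

theorem isCMModule_iff_of_finite (R A M : Type*) [CommRing R] [IsNoetherianRing R] [IsLocalRing R]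
    [CommRing A] [IsNoetherianRing A] [IsLocalRing A] [Algebra R A] [AddCommGroup M] [Module A M]
    [Module R M] [IsScalarTower R A M] [Module.Finite R M] :
    IsCMModule R M ↔ IsCMModule A M := by
  unfold IsCMModule
  rw [moduleDim_eq_of_finite R A, moduleDepth_eq_of_finite R A]

end CohenMacaulay

section Filtration

variable {R A M : Type*} [CommRing R] [CommRing A] [Algebra R A] [AddCommGroup M] [Module A M]
  [Module R M] [IsScalarTower R A M]

theorem annihilator_restrictScalars_span (N : Submodule R M) :
    ((Submodule.span A (N : Set M)).restrictScalars R).annihilator = N.annihilator := by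
  refine le_antisymm (Submodule.annihilator_mono Submodule.subset_span) fun r hr ↦ ?_
  rw [Submodule.mem_annihilator] at hr ⊢
  intro n hn
  have hle : Submodule.span A (N : Set M) ≤ LinearMap.ker (DistribSMul.toLinearMap A M r) :=
    Submodule.span_le.2 hr
  exact hle hn

variable [IsNoetherian R M]

theorem moduleDim_restrictScalars (N : Submodule A M) :
    moduleDim R ↥(N.restrictScalars R) = moduleDim A ↥N :=
  have : Module.Finite R ↥N := inferInstanceAs (Module.Finite R ↥(N.restrictScalars R))
  moduleDim_eq_of_finite R A ↥N

theorem moduleDim_span_coe (N : Submodule R M) :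
    moduleDim A ↥(Submodule.span A (N : Set M)) = moduleDim R ↥N := by
  rw [← moduleDim_restrictScalars (R := R)]
  exact congrArg (fun I : Ideal R ↦ ringKrullDim (R ⧸ I)) (annihilator_restrictScalars_span N)

variable (A) in
theorem restrictScalars_span_eq_of_isGreatest {N : Submodule R M} {d : WithBot ℕ∞}
    (hN : IsGreatest {N' : Submodule R M | moduleDim R ↥N' ≤ d} N) :
    (Submodule.span A (N : Set M)).restrictScalars R = N :=
  le_antisymm
    (hN.2 (by rw [Set.mem_ofPred_eq, moduleDim_restrictScalars, moduleDim_span_coe]; exact hN.1))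
    Submodule.subset_span

theorem isGreatest_restrictScalars_iff (N : Submodule A M) (d : WithBot ℕ∞) :
    IsGreatest {N' : Submodule R M | moduleDim R ↥N' ≤ d} (N.restrictScalars R) ↔
      IsGreatest {N' : Submodule A M | moduleDim A ↥N' ≤ d} N := by
  unfold IsGreatest
  simp only [Set.mem_ofPred_eq, moduleDim_restrictScalars, mem_upperBounds]
  refine and_congr_right fun _ ↦ ⟨fun h N' hN' ↦ ?_, fun h N' hN' ↦ ?_⟩
  · exact h (N'.restrictScalars R) (by rwa [moduleDim_restrictScalars])
  · exact Submodule.span_le (p := N).1 <|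
      h (Submodule.span A (N' : Set M)) (by rwa [moduleDim_span_coe])

theorem isDimFiltration_restrictScalars_iff {ℓ : ℕ} (D : Fin (ℓ + 1) → Submodule A M) :
    IsDimFiltration R M ℓ (fun i ↦ (D i).restrictScalars R) ↔ IsDimFiltration A M ℓ D := by
  unfold IsDimFiltration
  simp only [moduleDim_restrictScalars, isGreatest_restrictScalars_iff,
    Submodule.restrictScalars_eq_bot_iff, Submodule.restrictScalars_eq_top_iff]
  refine and_congr_right fun _ ↦ and_congr_right fun _ ↦ and_congr Iff.rfl <|
    and_congr_right fun _ ↦ ⟨fun h N hN hmax ↦ ?_, fun h N hN hmax ↦ ?_⟩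
  · obtain ⟨i, hi⟩ := h (N.restrictScalars R) (by rwa [Ne, Submodule.restrictScalars_eq_bot_iff])
      (by rwa [moduleDim_restrictScalars, isGreatest_restrictScalars_iff])
    exact ⟨i, Submodule.restrictScalars_injective R A M hi⟩
  · obtain ⟨N, rfl⟩ : ∃ N' : Submodule A M, N'.restrictScalars R = N :=
      ⟨_, restrictScalars_span_eq_of_isGreatest A hmax⟩
    rw [moduleDim_restrictScalars, isGreatest_restrictScalars_iff] at hmax
    obtain ⟨i, rfl⟩ := h N (by rwa [Ne, Submodule.restrictScalars_eq_bot_iff] at hN) hmax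
    exact ⟨i, rfl⟩

variable (A) in
theorem IsDimFiltration.exists_eq_restrictScalars {ℓ : ℕ} {D : Fin (ℓ + 1) → Submodule R M}
    (hD : IsDimFiltration R M ℓ D) :
    ∃ D' : Fin (ℓ + 1) → Submodule A M, D = fun i ↦ (D' i).restrictScalars R := by
  refine ⟨fun i ↦ Submodule.span A (D i : Set M), funext fun i ↦ ?_⟩
  cases i using Fin.cases with
  | zero => simp [hD.1]
  | succ i => exact (restrictScalars_span_eq_of_isGreatest A (hD.2.2.2.1 i)).symm

end Filtration

theorem isCMModule_restrictScalars_quotient_iff {R A M : Type*} [CommRing R] [IsNoetherianRing R]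
    [IsLocalRing R] [CommRing A] [IsNoetherianRing A] [IsLocalRing A] [Algebra R A]
    [AddCommGroup M] [Module A M] [Module R M] [IsScalarTower R A M] [Module.Finite R M]
    (N N' : Submodule A M) :
    IsCMModule R (↥(N.restrictScalars R) ⧸
        (N'.restrictScalars R).comap (N.restrictScalars R).subtype) ↔
      IsCMModule A (↥N ⧸ N'.comap N.subtype) := by
  have : Module.Finite R ↥N := inferInstanceAs (Module.Finite R ↥(N.restrictScalars R))
  have : Module.Finite R (↥N ⧸ N'.comap N.subtype) :=
    inferInstanceAs (Module.Finite R (↥N ⧸ (N'.comap N.subtype).restrictScalars R))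
  exact (isCMModule_congr (Submodule.Quotient.restrictScalarsEquiv R (N'.comap N.subtype))).trans
    (isCMModule_iff_of_finite R A _)

theorem stmt7_general (R A M : Type*) [CommRing R] [IsNoetherianRing R] [IsLocalRing R]
    [CommRing A] [IsNoetherianRing A] [IsLocalRing A] [Algebra R A] [AddCommGroup M] [Module A M]
    [Module R M] [IsScalarTower R A M] [Module.Finite R M] : IsSeqCM A M ↔ IsSeqCM R M := by
  constructor
  · rintro ⟨ℓ, D, hD, hCM⟩
    exact ⟨ℓ, _, (isDimFiltration_restrictScalars_iff D).2 hD,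
      fun i ↦ (isCMModule_restrictScalars_quotient_iff _ _).2 (hCM i)⟩
  · rintro ⟨ℓ, D, hD, hCM⟩
    obtain ⟨D, rfl⟩ := hD.exists_eq_restrictScalars A
    exact ⟨ℓ, D, (isDimFiltration_restrictScalars_iff D).1 hD,
      fun i ↦ (isCMModule_restrictScalars_quotient_iff _ _).1 (hCM i)⟩

/-- `A` is a sequentially Cohen-Macaulay local ring iff `A` is a sequentially
Cohen-Macaulay `R`-module. -/
theorem stmt7 (R : Type*) [CommRing R] [IsNoetherianRing R] [IsLocalRing R]
    (A : Type*) [CommRing A] [IsNoetherianRing A] [IsLocalRing A]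
    [Algebra R A] [Module.Finite R A] :
    IsSeqCMRing A ↔ IsSeqCM R A :=
  stmt7_general R A A
end

section
/- Let R be a Noetherian local ring and A a Noetherian local module-finite R-algebra such that R is a direct summand of A as an R-module. If A is a sequentially Cohen-Macaulay local ring, then R is a sequentially Cohen-Macaulay local ring. -/
open IsLocalRing

/-!
For a Noetherian module `M`, let `M_{≤ d}` be its largest submodule of dimension at most `d`. The
maps `N ↦ dim N` and `d ↦ M_{≤ d}` form a Galois connection whose closed submodules are the members
of the dimension filtration, so `M` is sequentially Cohen-Macaulay if and only if
`M_{≤ e} / M_{≤ d}` is Cohen-Macaulay whenever `e` covers `d`.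

If `A` is an integral local `R`-algebra and `M` is an `A`-module that is finite over `R`, then
dimensions over `R` and over `A` agree, and so do the submodules `M_{≤ d}`. The depth does not drop
from `A` to `R`: an element of `M` killed by the maximal ideal of `R` is killed by a power of any
`M`-regular element of the maximal ideal of `A`, hence vanishes, so there is an `M`-regular element
in the maximal ideal of `R`, and by Rees' theorem one may divide by it and repeat. Finally, a
retract of `M` has retracts of the subquotients of `M` as subquotients, and a retract of a
Cohen-Macaulay module is Cohen-Macaulay, since passing to it cannot shorten regular sequences or
raise the dimension.
-/

section GaloisConnection

variable {α β : Type*} [PartialOrder α] {l : α → β} {u : β → α}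

theorem strictMonoOn_u_range_l [PartialOrder β] (gc : GaloisConnection l u) :
    StrictMonoOn u (Set.range l) := by
  refine (gc.monotone_u.monotoneOn _).strictMonoOn_of_injOn ?_
  rintro _ ⟨a, rfl⟩ _ ⟨b, rfl⟩ h
  simpa only [gc.l_u_l_eq_l] using congrArg l h

theorem finite_range_of_galoisConnection [WellFoundedGT α] [LinearOrder β] [WellFoundedLT β]
    (gc : GaloisConnection l u) : (Set.range l).Finite := by
  have := (strictMonoOn_u_range_l gc).strictMono.wellFoundedGT
  exact Finite.of_wellFoundedLT_wellFoundedGT (Set.range l)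

end GaloisConnection

theorem exists_covBy_of_ne_bot_of_ne_top {e : WithBot ℕ∞} (hbot : e ≠ ⊥) (htop : e ≠ ⊤) :
    ∃ d, d ⋖ e := by
  obtain ⟨e, rfl⟩ := WithBot.ne_bot_iff_exists.mp hbot
  obtain ⟨n, rfl⟩ := ENat.ne_top_iff_exists.mp (mt (congrArg WithBot.some) htop)
  cases n with
  | zero => exact ⟨⊥, WithBot.bot_covBy_coe.mpr isMin_bot⟩
  | succ n => exact ⟨_, WithBot.coe_covBy_coe.mpr <|
      (Order.wcovBy_add_one (n : ℕ∞)).covBy_of_lt (Nat.cast_lt.mpr n.lt_succ_self)⟩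

theorem ringKrullDim_le_of_isIntegral (R S : Type*) [CommRing R] [CommRing S] [Algebra R S]
    [Algebra.IsIntegral R S] : ringKrullDim S ≤ ringKrullDim R :=
  Order.krullDim_le_of_strictMono (PrimeSpectrum.comap (algebraMap R S)) fun P Q hPQ ↦
    Ideal.IsIntegral.comap_lt_comap (R := R) (I := P.asIdeal) (J := Q.asIdeal) hPQ

theorem ringKrullDim_eq_of_isIntegral (R S : Type*) [CommRing R] [CommRing S] [Algebra R S]
    [Algebra.IsIntegral R S] [FaithfulSMul R S] : ringKrullDim S = ringKrullDim R := by
  refine (ringKrullDim_le_of_isIntegral R S).antisymm (iSup_le fun l ↦ ?_)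
  obtain ⟨P, -, _, hP⟩ := Ideal.exists_ideal_over_prime_of_isIntegral (S := S)
    l.head.asIdeal ⊥ (by simp [← RingHom.ker_eq_comap_bot])
  have : P.LiesOver (RelSeries.head l).asIdeal := ⟨hP.symm⟩
  obtain ⟨L, hL, -⟩ := Ideal.exists_ltSeries_of_hasGoingUp l P
  exact hL ▸ Order.LTSeries.length_le_krullDim L

theorem ringKrullDim_quotient_inf_le {R : Type*} [CommRing R] (I J : Ideal R) :
    ringKrullDim (R ⧸ I ⊓ J) ≤ max (ringKrullDim (R ⧸ I)) (ringKrullDim (R ⧸ J)) := by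
  simp only [ringKrullDim_quotient]
  refine iSup_le fun l ↦ ?_
  have length_le (K : Ideal R) (hK : K ≤ l.head.1.asIdeal) :
      (l.length : WithBot ℕ∞) ≤ Order.krullDim (PrimeSpectrum.zeroLocus (K : Set R)) :=
    Order.LTSeries.length_le_krullDim
      { length := l.length
        toFun := fun i ↦ ⟨(l i).1, hK.trans (l.head_le i)⟩
        step := fun i ↦ l.step i }
  exact le_max_iff.mpr ((l.head.1.2.inf_le.mp l.head.2).imp (length_le I) (length_le J))

section ModuleDim

variable {R M N : Type*} [CommRing R] [AddCommGroup M] [Module R M] [AddCommGroup N] [Module R N]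

theorem moduleDim_le_of_annihilator_le
    (h : Module.annihilator R M ≤ Module.annihilator R N) : moduleDim R N ≤ moduleDim R M :=
  ringKrullDim_le_of_surjective (Ideal.Quotient.factor h) (Ideal.Quotient.factor_surjective h)

theorem moduleDim_le_of_injective (f : M →ₗ[R] N) (hf : Function.Injective f) :
    moduleDim R M ≤ moduleDim R N :=
  moduleDim_le_of_annihilator_le (f.annihilator_le_of_injective hf)

theorem moduleDim_le_of_surjective (f : M →ₗ[R] N) (hf : Function.Surjective f) :
    moduleDim R N ≤ moduleDim R M :=
  moduleDim_le_of_annihilator_le (f.annihilator_le_of_surjective hf)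

theorem moduleDim_map_le (f : M →ₗ[R] N) (P : Submodule R M) :
    moduleDim R (P.map f) ≤ moduleDim R P :=
  moduleDim_le_of_surjective (f.submoduleMap P) (f.submoduleMap_surjective P)

theorem moduleDim_sup_le (P Q : Submodule R M) :
    moduleDim R ↥(P ⊔ Q) ≤ max (moduleDim R P) (moduleDim R Q) := by
  change ringKrullDim (R ⧸ (P ⊔ Q).annihilator) ≤ _
  rw [Submodule.annihilator_sup]
  exact ringKrullDim_quotient_inf_le _ _

theorem moduleDim_eq_bot_iff : moduleDim R M = ⊥ ↔ Subsingleton M := by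
  rw [moduleDim, ringKrullDim, Order.krullDim_eq_bot_iff, PrimeSpectrum.isEmpty_iff_subsingleton,
    Ideal.Quotient.subsingleton_iff, Module.annihilator_eq_top_iff]

theorem moduleDim_ne_top [FiniteRingKrullDim R] : moduleDim R M ≠ ⊤ :=
  ((ringKrullDim_quotient_le _).trans_lt ringKrullDim_lt_top).ne

theorem moduleDim_eq_supportDim [Module.Finite R M] : moduleDim R M = Module.supportDim R M :=
  (Module.supportDim_eq_ringKrullDim_quotient_annihilator R M).symm

theorem moduleDim_restrictScalars_s9 (R A M : Type*) [CommRing R] [CommRing A] [Algebra R A]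
    [Algebra.IsIntegral R A] [AddCommGroup M] [Module R M] [Module A M] [IsScalarTower R A M] :
    moduleDim R M = moduleDim A M := by
  have : (Module.annihilator A M).LiesOver (Module.annihilator R M) :=
    ⟨by ext r; simp [Module.mem_annihilator]⟩
  exact (ringKrullDim_eq_of_isIntegral _ _).symm

theorem moduleDim_span_le {R : Type*} (A : Type*) {M : Type*} [CommRing R] [CommRing A]
    [Algebra R A] [Algebra.IsIntegral R A] [AddCommGroup M] [Module R M] [Module A M]
    [IsScalarTower R A M] (N : Submodule R M) :
    moduleDim A (Submodule.span A (N : Set M)) ≤ moduleDim R N := by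
  rw [← moduleDim_restrictScalars_s9 R A]
  refine moduleDim_le_of_annihilator_le fun r hr ↦ ?_
  have hN : (N : Set M) ⊆ Submodule.torsionBy A M (algebraMap R A r) := fun x hx ↦ by
    simpa using Submodule.mem_annihilator.mp hr x hx
  refine Module.mem_annihilator.mpr fun x ↦ Subtype.ext ?_
  simpa using Submodule.span_le.mpr hN x.2

end ModuleDim

section DimSubmodule

variable (R M : Type*) [CommRing R] [AddCommGroup M] [Module R M]

/-- The largest submodule `M_{≤ d}` of `M` of dimension at most `d`, when `M` is Noetherian. As `d`
varies, these are the members of the dimension filtration of `M`. -/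
noncomputable def dimSubmodule (d : WithBot ℕ∞) : Submodule R M :=
  sSup {N : Submodule R M | moduleDim R N ≤ d}

/-- The quotient `M_{≤ e} / (M_{≤ d} ∩ M_{≤ e})`; when `e` covers `d`, it is the quotient of
consecutive members of the dimension filtration of `M`, or zero if there is no member of dimension
`e`. -/
abbrev DimSubquotient (d e : WithBot ℕ∞) : Type _ :=
  dimSubmodule R M e ⧸ (dimSubmodule R M d).submoduleOf (dimSubmodule R M e)

theorem gc_moduleDim_dimSubmodule [IsNoetherian R M] :
    GaloisConnection (fun N : Submodule R M ↦ moduleDim R N) (dimSubmodule R M) := by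
  have moduleDim_dimSubmodule_le (d : WithBot ℕ∞) : moduleDim R (dimSubmodule R M d) ≤ d := by
    refine (CompleteLattice.isSupClosedCompact_iff_wellFoundedGT (Submodule R M)).mpr inferInstance
      {N : Submodule R M | moduleDim R N ≤ d} ⟨⊥, ?_⟩ fun P hP Q hQ ↦ ?_
    · exact (moduleDim_eq_bot_iff.mpr inferInstance).trans_le bot_le
    · exact (moduleDim_sup_le P Q).trans (max_le hP hQ)
  exact fun N d ↦ ⟨fun h ↦ le_sSup h, fun h ↦
    (moduleDim_le_of_injective _ (Submodule.inclusion_injective h)).trans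
      (moduleDim_dimSubmodule_le d)⟩

variable {R M}

theorem le_dimSubmodule_iff [IsNoetherian R M] {N : Submodule R M} {d : WithBot ℕ∞} :
    N ≤ dimSubmodule R M d ↔ moduleDim R N ≤ d :=
  (gc_moduleDim_dimSubmodule R M N d).symm

theorem dimSubmodule_bot [IsNoetherian R M] : dimSubmodule R M ⊥ = ⊥ :=
  Submodule.subsingleton_iff_eq_bot.mp <| (moduleDim_eq_bot_iff (R := R)).mp <|
    le_bot_iff.mp (le_dimSubmodule_iff.mp le_rfl)

theorem dimSubmodule_le_comap {N : Type*} [AddCommGroup N] [Module R N] (f : M →ₗ[R] N)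
    (d : WithBot ℕ∞) : dimSubmodule R M d ≤ (dimSubmodule R N d).comap f :=
  sSup_le fun P hP ↦ Submodule.map_le_iff_le_comap.mp <|
    le_sSup (show moduleDim R (P.map f) ≤ d from (moduleDim_map_le f P).trans hP)

/-- The map on the subquotients of the dimension filtrations induced by a linear map, which cannot
increase the dimension of submodules. -/
noncomputable def dimSubquotientMap {N : Type*} [AddCommGroup N] [Module R N] (f : M →ₗ[R] N)
    (d e : WithBot ℕ∞) : DimSubquotient R M d e →ₗ[R] DimSubquotient R N d e :=
  Submodule.mapQ _ _ (f.restrict (dimSubmodule_le_comap f e))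
    fun _ hx ↦ dimSubmodule_le_comap f d hx

theorem dimSubquotientMap_comp_eq_id {N : Type*} [AddCommGroup N] [Module R N] {i : N →ₗ[R] M}
    {p : M →ₗ[R] N} (hpi : p ∘ₗ i = LinearMap.id) (d e : WithBot ℕ∞) :
    dimSubquotientMap p d e ∘ₗ dimSubquotientMap i d e = LinearMap.id := by
  refine Submodule.linearMap_qext _ (LinearMap.ext fun x ↦ congrArg (Submodule.mkQ _) ?_)
  exact Subtype.ext (LinearMap.congr_fun hpi x)

theorem isGreatest_moduleDim_le_iff [IsNoetherian R M] {N : Submodule R M} :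
    IsGreatest {N' : Submodule R M | moduleDim R N' ≤ moduleDim R N} N ↔
      N ∈ Set.range (dimSubmodule R M) := by
  have gc := gc_moduleDim_dimSubmodule R M
  constructor
  · exact fun h ↦ ⟨_, (h.unique gc.isGreatest_u).symm⟩
  · rintro ⟨d, rfl⟩
    simpa only [gc.u_l_u_eq_u d] using gc.isGreatest_u (a := moduleDim R (dimSubmodule R M d))

theorem isDimFiltration_iff [IsNoetherian R M] {ℓ : ℕ} {D : Fin (ℓ + 1) → Submodule R M} :
    IsDimFiltration R M ℓ D ↔ StrictMono D ∧ Set.range D = Set.range (dimSubmodule R M) := by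
  simp only [IsDimFiltration, isGreatest_moduleDim_le_iff]
  constructor
  · rintro ⟨hbot, -, hmono, hsucc, hex⟩
    refine ⟨hmono, Set.Subset.antisymm ?_ ?_⟩
    · rintro _ ⟨i, rfl⟩
      cases i using Fin.cases with
      | zero => exact ⟨⊥, dimSubmodule_bot.trans hbot.symm⟩
      | succ i => exact hsucc i
    · rintro _ ⟨d, rfl⟩
      by_cases hd : dimSubmodule R M d = ⊥
      · exact ⟨0, hbot.trans hd.symm⟩
      · exact hex _ hd ⟨d, rfl⟩
  · rintro ⟨hmono, hrange⟩
    obtain ⟨i, hi⟩ : ⊥ ∈ Set.range D := hrange ▸ ⟨⊥, dimSubmodule_bot⟩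
    obtain ⟨j, hj⟩ : ⊤ ∈ Set.range D := hrange ▸ ⟨⊤, (gc_moduleDim_dimSubmodule R M).u_top⟩
    exact ⟨le_bot_iff.mp (hi ▸ hmono.monotone (Fin.zero_le i)),
      top_le_iff.mp (hj ▸ hmono.monotone (Fin.le_last j)), hmono,
      fun i ↦ hrange ▸ ⟨_, rfl⟩, fun N _ hN ↦ by rwa [← hrange] at hN⟩

variable (R M) in
theorem exists_isDimFiltration [IsNoetherian R M] :
    ∃ (ℓ : ℕ) (D : Fin (ℓ + 1) → Submodule R M), IsDimFiltration R M ℓ D := by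
  have gc := gc_moduleDim_dimSubmodule R M
  have fin := finite_range_of_galoisConnection gc
  obtain ⟨ℓ, card⟩ : ∃ ℓ, fin.toFinset.card = ℓ + 1 :=
    Nat.exists_eq_succ_of_ne_zero <| Finset.card_ne_zero.mpr <|
      fin.toFinset_nonempty.mpr (Set.range_nonempty _)
  refine ⟨ℓ, dimSubmodule R M ∘ fin.toFinset.orderEmbOfFin card,
    isDimFiltration_iff.mpr ⟨fun i j hij ↦ ?_, ?_⟩⟩
  · have mem_range (i : Fin (ℓ + 1)) :=
      fin.mem_toFinset.mp (fin.toFinset.orderEmbOfFin_mem card i)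
    exact strictMonoOn_u_range_l gc (mem_range i) (mem_range j)
      ((fin.toFinset.orderEmbOfFin card).strictMono hij)
  · rw [Set.range_comp, Finset.range_orderEmbOfFin, fin.coe_toFinset]
    refine (Set.image_subset_range _ _).antisymm ?_
    rintro _ ⟨d, rfl⟩
    exact ⟨_, ⟨_, rfl⟩, gc.u_l_u_eq_u d⟩

theorem IsDimFiltration.succ_eq_dimSubmodule [IsNoetherian R M] {ℓ : ℕ}
    {D : Fin (ℓ + 1) → Submodule R M} (hD : IsDimFiltration R M ℓ D) (i : Fin ℓ) :
    D i.succ = dimSubmodule R M (moduleDim R (D i.succ)) :=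
  (hD.2.2.2.1 i).unique (gc_moduleDim_dimSubmodule R M).isGreatest_u

theorem IsDimFiltration.castSucc_eq_dimSubmodule [IsNoetherian R M] {ℓ : ℕ}
    {D : Fin (ℓ + 1) → Submodule R M} (hD : IsDimFiltration R M ℓ D) {i : Fin ℓ}
    {d : WithBot ℕ∞} (hd : d ⋖ moduleDim R (D i.succ)) :
    D i.castSucc = dimSubmodule R M d := by
  obtain ⟨hmono, hrange⟩ := isDimFiltration_iff.mp hD
  have moduleDim_lt : moduleDim R (D i.castSucc) < moduleDim R (D i.succ) := by
    obtain ⟨e, he⟩ : D i.castSucc ∈ Set.range (dimSubmodule R M) := hrange ▸ ⟨_, rfl⟩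
    refine lt_of_not_ge fun hle ↦ (hmono i.castSucc_lt_succ).not_ge ?_
    rw [← le_dimSubmodule_iff, ← he] at hle
    exact (hle.trans_eq ((gc_moduleDim_dimSubmodule R M).u_l_u_eq_u e)).trans_eq he
  obtain ⟨k, hk⟩ : dimSubmodule R M d ∈ Set.range D := hrange ▸ ⟨_, rfl⟩
  have k_le : k ≤ i.castSucc := by
    refine Fin.le_castSucc_iff.mpr (lt_of_not_ge fun hle ↦ hd.lt.not_ge ?_)
    exact le_dimSubmodule_iff.mp (hk ▸ hmono.monotone hle)
  exact (le_dimSubmodule_iff.mpr (hd.le_of_lt moduleDim_lt)).antisymm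
    (hk ▸ hmono.monotone k_le)

theorem restrictScalars_dimSubmodule (R A : Type*) {M : Type*} [CommRing R] [CommRing A]
    [Algebra R A] [Algebra.IsIntegral R A] [AddCommGroup M] [Module R M] [Module A M]
    [IsScalarTower R A M] [IsNoetherian R M] (d : WithBot ℕ∞) :
    (dimSubmodule A M d).restrictScalars R = dimSubmodule R M d := by
  have : IsNoetherian A M := isNoetherian_of_tower R inferInstance
  refine le_antisymm (le_dimSubmodule_iff.mpr ?_) ?_
  · exact (moduleDim_restrictScalars_s9 R A (dimSubmodule A M d)).trans_le
      (le_dimSubmodule_iff.mp le_rfl)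
  · exact Submodule.subset_span.trans <| le_dimSubmodule_iff.mpr <|
      (moduleDim_span_le A _).trans (le_dimSubmodule_iff.mp le_rfl)

end DimSubmodule

section RegularSequences

open CategoryTheory Abelian RingTheory.Sequence
open scoped Pointwise

/-- There is a weakly `M`-regular sequence of length `n` contained in the ideal `I`; when `M` is
finite and `I M ≠ M`, this says that the grade of `I` on `M` is at least `n`. -/
def HasWeaklyRegularSequence {R : Type*} [CommRing R] (I : Ideal R) (M : Type*) [AddCommGroup M]
    [Module R M] (n : ℕ) : Prop :=
  ∃ rs : List R, rs.length = n ∧ (∀ r ∈ rs, r ∈ I) ∧ IsWeaklyRegular M rs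

theorem hasWeaklyRegularSequence_congr {R M N : Type*} [CommRing R] {I : Ideal R}
    [AddCommGroup M] [Module R M] [AddCommGroup N] [Module R N] (e : M ≃ₗ[R] N) {n : ℕ} :
    HasWeaklyRegularSequence I M n ↔ HasWeaklyRegularSequence I N n := by
  simp only [HasWeaklyRegularSequence, e.isWeaklyRegular_congr]

theorem isRegular_iff_isWeaklyRegular_of_smul_top_ne_top {R M : Type*} [CommRing R]
    [AddCommGroup M] [Module R M] {I : Ideal R} (hI : I • (⊤ : Submodule R M) ≠ ⊤) {rs : List R}
    (hrs : ∀ r ∈ rs, r ∈ I) : IsRegular M rs ↔ IsWeaklyRegular M rs := by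
  refine ⟨fun h ↦ h.1, fun h ↦ ⟨h, fun h_top ↦ hI (top_le_iff.mp ?_)⟩⟩
  exact h_top.trans_le (Submodule.smul_mono_left (Ideal.span_le.mpr hrs))

theorem smul_top_quotSMulTop_ne_top {R M : Type*} [CommRing R] [AddCommGroup M] [Module R M]
    {I : Ideal R} (hI : I • (⊤ : Submodule R M) ≠ ⊤) {x : R} (hx : x ∈ I) :
    I • (⊤ : Submodule R (QuotSMulTop x M)) ≠ ⊤ := by
  contrapose! hI
  have hle : x • (⊤ : Submodule R M) ≤ I • ⊤ := by
    rw [← Submodule.ideal_span_singleton_smul]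
    exact Submodule.smul_mono_left ((Ideal.span_singleton_le_iff_mem I).mpr hx)
  simpa [Submodule.comap_smul_top_of_surjective I _ (Submodule.mkQ_surjective _), hle]
    using congrArg (Submodule.comap (x • (⊤ : Submodule R M)).mkQ) hI

universe u v

theorem hasWeaklyRegularSequence_iff_subsingleton_ext {R : Type u} {M : Type v} [CommRing R]
    [IsNoetherianRing R] [Small.{v} R] [AddCommGroup M] [Module R M] [Module.Finite R M]
    {I : Ideal R} (hI : I • (⊤ : Submodule R M) ≠ ⊤) {n : ℕ} :
    HasWeaklyRegularSequence I M n ↔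
      ∀ i < n, Subsingleton
        (Ext (ModuleCat.of R (Shrink.{v} (R ⧸ I))) (ModuleCat.of R M) i) := by
  refine Iff.trans ?_ ((ModuleCat.exists_isRegular_tfae I n (.of R M) hI.lt_top).out 3 1)
  exact exists_congr fun rs ↦ and_congr_right fun _ ↦ and_congr_right fun hrs ↦
    (isRegular_iff_isWeaklyRegular_of_smul_top_ne_top hI hrs).symm

theorem HasWeaklyRegularSequence.quotSMulTop_of_small {R : Type u} {M : Type v} [CommRing R]
    [IsNoetherianRing R] [Small.{v} R] [AddCommGroup M] [Module R M] [Module.Finite R M]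
    {I : Ideal R} (hI : I • (⊤ : Submodule R M) ≠ ⊤) {n : ℕ}
    (h : HasWeaklyRegularSequence I M (n + 1)) {x : R} (hx : x ∈ I) (hxM : IsSMulRegular M x) :
    HasWeaklyRegularSequence I (QuotSMulTop x M) n := by
  rw [hasWeaklyRegularSequence_iff_subsingleton_ext hI] at h
  rw [hasWeaklyRegularSequence_iff_subsingleton_ext (smul_top_quotSMulTop_ne_top hI hx)]
  intro i hi
  have zero_left := AddCommGrpCat.isZero_of_iff_subsingleton.mpr (h i (by lia))
  have zero_right := AddCommGrpCat.isZero_of_iff_subsingleton.mpr (h (i + 1) (by lia))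
  exact AddCommGrpCat.subsingleton_of_isZero <| ShortComplex.Exact.isZero_of_both_zeros
    (Ext.covariant_sequence_exact₃' _
      (IsSMulRegular.smulShortComplex_shortExact (M := .of R M) hxM) i (i + 1) rfl)
    (zero_left.eq_zero_of_src _) (zero_right.eq_zero_of_tgt _)

theorem HasWeaklyRegularSequence.quotSMulTop {R : Type u} {M : Type v} [CommRing R]
    [IsNoetherianRing R] [AddCommGroup M] [Module R M] [Module.Finite R M]
    {I : Ideal R} (hI : I • (⊤ : Submodule R M) ≠ ⊤) {n : ℕ}
    (h : HasWeaklyRegularSequence I M (n + 1)) {x : R} (hx : x ∈ I) (hxM : IsSMulRegular M x) :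
    HasWeaklyRegularSequence I (QuotSMulTop x M) n := by
  let e : ULift.{u} M ≃ₗ[R] M := ULift.moduleEquiv
  have hI' : I • (⊤ : Submodule R (ULift.{u} M)) ≠ ⊤ := by
    contrapose! hI
    simpa [Submodule.map_smul''] using congrArg (Submodule.map e.toLinearMap) hI
  refine (hasWeaklyRegularSequence_congr (QuotSMulTop.congr x e)).mp ?_
  exact ((hasWeaklyRegularSequence_congr e).mpr h).quotSMulTop_of_small hI' hx
    ((e.isSMulRegular_congr x).mpr hxM)

theorem exists_isSMulRegular_mem_of_mem_radical_map {R A M : Type*} [CommRing R]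
    [IsNoetherianRing R] [CommRing A] [Algebra R A] [AddCommGroup M] [Module R M] [Module A M]
    [IsScalarTower R A M] [Module.Finite R M] {I : Ideal R} {y : A}
    (hy : y ∈ (I.map (algebraMap R A)).radical) (hyM : IsSMulRegular M y) :
    ∃ r ∈ I, IsSMulRegular M r := by
  obtain ⟨k, hk⟩ := hy
  have eq_zero_of_smul_eq_zero (x : M) (hx : ∀ r ∈ I, r • x = 0) : x = 0 := by
    have hle : I.map (algebraMap R A) ≤ (Submodule.span A {x}).annihilator :=
      Ideal.map_le_iff_le_comap.mpr fun r hr ↦ by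
        simpa [Submodule.mem_annihilator_span_singleton] using hx r hr
    exact (hyM.pow k).right_eq_zero_of_smul
      ((Submodule.mem_annihilator_span_singleton _ _).mp (hle hk))
  have : Subsingleton ((R ⧸ I) →ₗ[R] M) := by
    refine subsingleton_of_forall_eq 0 fun f ↦ Submodule.linearMap_qext _ (LinearMap.ext_ring ?_)
    refine eq_zero_of_smul_eq_zero _ fun r hr ↦ ?_
    change r • f (Submodule.Quotient.mk 1) = 0
    rw [← map_smul, ← Submodule.Quotient.mk_smul, smul_eq_mul, mul_one,
      (Submodule.Quotient.mk_eq_zero I).mpr hr, map_zero]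
  simpa [Ideal.annihilator_quotient] using IsSMulRegular.subsingleton_linearMap_iff.mp this

theorem HasWeaklyRegularSequence.of_radical_map {R A M : Type*} [CommRing R] [IsNoetherianRing R]
    [CommRing A] [IsNoetherianRing A] [Algebra R A] [AddCommGroup M] [Module R M] [Module A M]
    [IsScalarTower R A M] [Module.Finite R M] {I : Ideal R}
    (hI : (I.map (algebraMap R A)).radical • (⊤ : Submodule A M) ≠ ⊤) {n : ℕ}
    (h : HasWeaklyRegularSequence (I.map (algebraMap R A)).radical M n) :
    HasWeaklyRegularSequence I M n := by
  induction n generalizing M with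
  | zero => exact ⟨[], rfl, by simp, .nil R M⟩
  | succ n ih =>
    have : Module.Finite A M := .of_restrictScalars_finite R A M
    obtain ⟨t, htI, htM⟩ : ∃ t ∈ I, IsSMulRegular M t := by
      obtain ⟨rs, hlen, hrs, hreg⟩ := h
      obtain ⟨y, ys, rfl⟩ := List.exists_cons_of_length_eq_add_one hlen
      exact exists_isSMulRegular_mem_of_mem_radical_map (hrs y List.mem_cons_self)
        ((isWeaklyRegular_cons_iff M y ys).mp hreg).1
    have htA := Ideal.le_radical (Ideal.mem_map_of_mem (algebraMap R A) htI)
    have htM' : IsSMulRegular M (algebraMap R A t) := (isSMulRegular_algebraMap_iff A).mpr htM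
    obtain ⟨ts, hlen, hts, hreg⟩ :=
      ih (smul_top_quotSMulTop_ne_top hI htA) (h.quotSMulTop hI htA htM')
    refine ⟨t :: ts, by rw [List.length_cons, hlen], List.forall_mem_cons.mpr ⟨htI, hts⟩, ?_⟩
    rw [← isWeaklyRegular_map_algebraMap_iff A, List.map_cons, isWeaklyRegular_cons_iff,
      isWeaklyRegular_map_algebraMap_iff]
    exact ⟨htM', hreg⟩

theorem HasWeaklyRegularSequence.of_retract {R Q M : Type*} [CommRing R] [AddCommGroup Q]
    [Module R Q] [AddCommGroup M] [Module R M] {I : Ideal R} {n : ℕ}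
    (h : HasWeaklyRegularSequence I M n) {i : Q →ₗ[R] M} {p : M →ₗ[R] Q}
    (hpi : p ∘ₗ i = LinearMap.id) : HasWeaklyRegularSequence I Q n := by
  obtain ⟨rs, hlen, hrs, hreg⟩ := h
  refine ⟨rs, hlen, hrs, ⟨fun j hj ↦ (hreg.1 j hj).of_injective
    (Submodule.mapQ _ _ i (Submodule.smul_top_le_comap_smul_top _ i)) ?_⟩⟩
  refine Function.LeftInverse.injective
    (g := Submodule.mapQ _ _ p (Submodule.smul_top_le_comap_smul_top _ p)) fun q ↦ ?_
  obtain ⟨q, rfl⟩ := Submodule.mkQ_surjective _ q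
  simpa using congrArg _ (LinearMap.congr_fun hpi q)

end RegularSequences

section CohenMacaulay

theorem radical_map_maximalIdeal (R A : Type*) [CommRing R] [IsLocalRing R] [CommRing A]
    [IsLocalRing A] [Algebra R A] [Algebra.IsIntegral R A] :
    ((maximalIdeal R).map (algebraMap R A)).radical = maximalIdeal A := by
  have comap_maximalIdeal : (maximalIdeal A).comap (algebraMap R A) = maximalIdeal R :=
    eq_maximalIdeal (Ideal.isMaximal_comap_of_isIntegral_of_isMaximal _)
  refine le_antisymm ?_ ?_
  · rw [(maximalIdeal.isMaximal A).isPrime.radical_le_iff, Ideal.map_le_iff_le_comap,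
      comap_maximalIdeal]
  · rw [Ideal.radical_eq_sInf]
    refine le_sInf fun P ⟨hP, _⟩ ↦ ?_
    have comap_eq : P.comap (algebraMap R A) = maximalIdeal R :=
      ((maximalIdeal.isMaximal R).eq_of_le (Ideal.IsPrime.ne_top inferInstance)
        (Ideal.map_le_iff_le_comap.mp hP)).symm
    have : P.IsMaximal := Ideal.isMaximal_of_isIntegral_of_isMaximal_comap (R := R) P
      (comap_eq ▸ maximalIdeal.isMaximal R)
    exact (eq_maximalIdeal this).ge

theorem moduleDepth_le_moduleDepth {R S M N : Type*} [CommRing R] [IsLocalRing R] [CommRing S]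
    [IsLocalRing S] [AddCommGroup M] [Module R M] [AddCommGroup N] [Module S N]
    [Module.Finite S N] [Nontrivial N]
    (h : ∀ n, HasWeaklyRegularSequence (maximalIdeal R) M n →
      HasWeaklyRegularSequence (maximalIdeal S) N n) :
    moduleDepth R M ≤ moduleDepth S N := by
  refine sSup_le ?_
  rintro _ ⟨rs, rfl, hrs, hreg⟩
  obtain ⟨ts, hlen, hts, hreg'⟩ := h rs.length ⟨rs, rfl, hrs, hreg.1⟩
  exact le_sSup ⟨ts, by rw [hlen], hts, .of_isWeaklyRegular_of_mem_maximalIdeal _ hts hreg'⟩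

theorem moduleDepth_le_moduleDim (R M : Type*) [CommRing R] [IsNoetherianRing R] [IsLocalRing R]
    [AddCommGroup M] [Module R M] [Module.Finite R M] [Nontrivial M] :
    (moduleDepth R M : WithBot ℕ∞) ≤ moduleDim R M := by
  obtain ⟨e, he⟩ := WithBot.ne_bot_iff_exists.mp (Module.supportDim_ne_bot_of_nontrivial R M)
  rw [moduleDim_eq_supportDim, ← he, WithBot.coe_le_coe]
  refine sSup_le ?_
  rintro _ ⟨rs, rfl, -, hrs⟩
  rw [← WithBot.coe_le_coe, he, ← Module.supportDim_add_length_eq_supportDim_of_isRegular rs hrs]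
  have := hrs.quot_ofList_smul_nontrivial ⊤
  exact le_add_of_nonneg_left
    (Order.krullDim_nonneg_iff.mpr Module.nonempty_support_of_nontrivial.to_subtype)

theorem IsCMModule.of_retract {R M Q : Type*} [CommRing R] [IsNoetherianRing R] [IsLocalRing R]
    [AddCommGroup M] [Module R M] [Module.Finite R M] [AddCommGroup Q] [Module R Q]
    (hM : IsCMModule R M) {i : Q →ₗ[R] M} {p : M →ₗ[R] Q} (hpi : p ∘ₗ i = LinearMap.id) :
    IsCMModule R Q := by
  intro
  have hi : Function.Injective i := Function.LeftInverse.injective (LinearMap.congr_fun hpi)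
  have hp : Function.Surjective p := Function.RightInverse.surjective (LinearMap.congr_fun hpi)
  have := hi.nontrivial
  have := Module.Finite.of_surjective p hp
  refine (moduleDepth_le_moduleDim R Q).antisymm ?_
  calc
    moduleDim R Q ≤ moduleDim R M := moduleDim_le_of_injective i hi
    _ = moduleDepth R M := (hM inferInstance).symm
    _ ≤ moduleDepth R Q :=
      WithBot.coe_le_coe.mpr (moduleDepth_le_moduleDepth fun _ h ↦ h.of_retract hpi)

theorem IsCMModule.restrictScalars (R : Type*) {A M : Type*} [CommRing R] [IsNoetherianRing R]
    [IsLocalRing R] [CommRing A] [IsNoetherianRing A] [IsLocalRing A] [Algebra R A]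
    [Algebra.IsIntegral R A] [AddCommGroup M] [Module R M] [Module A M] [IsScalarTower R A M]
    [Module.Finite R M] (hM : IsCMModule A M) : IsCMModule R M := by
  intro
  have : Module.Finite A M := .of_restrictScalars_finite R A M
  have smul_ne_top : maximalIdeal A • (⊤ : Submodule A M) ≠ ⊤ :=
    (Submodule.top_ne_ideal_smul_of_le_jacobson_annihilator (maximalIdeal_le_jacobson _)).symm
  refine (moduleDepth_le_moduleDim R M).antisymm ?_
  rw [moduleDim_restrictScalars_s9 R A M, ← hM inferInstance, WithBot.coe_le_coe]
  refine moduleDepth_le_moduleDepth fun n h ↦ ?_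
  rw [← radical_map_maximalIdeal R A] at h smul_ne_top
  exact h.of_radical_map smul_ne_top

end CohenMacaulay

section SequentiallyCohenMacaulay

theorem IsDimFiltration.isCMModule_iff {R M : Type*} [CommRing R] [IsLocalRing R]
    [AddCommGroup M] [Module R M] [IsNoetherian R M] {ℓ : ℕ} {D : Fin (ℓ + 1) → Submodule R M}
    (hD : IsDimFiltration R M ℓ D) {i : Fin ℓ} {d : WithBot ℕ∞}
    (hd : d ⋖ moduleDim R (D i.succ)) :
    IsCMModule R (D i.succ ⧸ (D i.castSucc).comap (D i.succ).subtype) ↔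
      IsCMModule R (DimSubquotient R M d (moduleDim R (D i.succ))) := by
  rw [hD.castSucc_eq_dimSubmodule hd]
  generalize he : moduleDim R (D i.succ) = e
  rw [hD.succ_eq_dimSubmodule i, he]
  rfl

theorem isSeqCM_iff {R M : Type*} [CommRing R] [IsLocalRing R] [FiniteRingKrullDim R]
    [AddCommGroup M] [Module R M] [IsNoetherian R M] :
    IsSeqCM R M ↔ ∀ d e : WithBot ℕ∞, d ⋖ e → IsCMModule R (DimSubquotient R M d e) := by
  constructor
  · rintro ⟨ℓ, D, hD, hCM⟩ d e hde
    by_cases hle : dimSubmodule R M e ≤ dimSubmodule R M d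
    · have : Subsingleton (DimSubquotient R M d e) :=
        Submodule.Quotient.subsingleton_iff.mpr (Submodule.submoduleOf_eq_top.mpr hle)
      exact fun h ↦ absurd h (not_nontrivial _)
    obtain ⟨j, hj⟩ : dimSubmodule R M e ∈ Set.range D := (isDimFiltration_iff.mp hD).2 ▸ ⟨_, rfl⟩
    obtain ⟨i, rfl⟩ : ∃ i : Fin ℓ, i.succ = j := Fin.exists_succ_eq.mpr fun h ↦
      hle <| hj.symm.trans_le <| h ▸ hD.1.trans_le bot_le
    have moduleDim_eq : moduleDim R (D i.succ) = e := by
      rw [hj]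
      refine (le_dimSubmodule_iff.mp le_rfl).eq_of_not_lt fun hlt ↦ hle ?_
      exact le_dimSubmodule_iff.mpr (hde.le_of_lt hlt)
    subst moduleDim_eq
    exact (hD.isCMModule_iff hde).mp (hCM i)
  · intro h
    obtain ⟨ℓ, D, hD⟩ := exists_isDimFiltration R M
    refine ⟨ℓ, D, hD, fun i ↦ ?_⟩
    have succ_ne_bot : moduleDim R (D i.succ) ≠ ⊥ := by
      rw [Ne, moduleDim_eq_bot_iff, Submodule.subsingleton_iff_eq_bot]
      exact (hD.2.2.1 i.castSucc_lt_succ).ne_bot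
    obtain ⟨d, hd⟩ := exists_covBy_of_ne_bot_of_ne_top succ_ne_bot moduleDim_ne_top
    exact (hD.isCMModule_iff hd).mpr (h _ _ hd)

theorem IsSeqCM.restrictScalars (R : Type*) {A M : Type*} [CommRing R] [IsNoetherianRing R]
    [IsLocalRing R] [CommRing A] [IsNoetherianRing A] [IsLocalRing A] [Algebra R A]
    [Algebra.IsIntegral R A] [AddCommGroup M] [Module R M] [Module A M] [IsScalarTower R A M]
    [Module.Finite R M] (hM : IsSeqCM A M) : IsSeqCM R M := by
  have : IsNoetherian A M := isNoetherian_of_tower R inferInstance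
  refine isSeqCM_iff.mpr fun d e hde ↦ ?_
  have : Module.Finite R (dimSubmodule A M e) :=
    Module.IsNoetherian.finite R ((dimSubmodule A M e).restrictScalars R)
  let equiv := Submodule.Quotient.restrictScalarsEquiv R
    ((dimSubmodule A M d).submoduleOf (dimSubmodule A M e))
  have hCM := ((isSeqCM_iff.mp hM d e hde).restrictScalars R).of_retract equiv.symm_comp
  unfold DimSubquotient
  rw [← restrictScalars_dimSubmodule R A, ← restrictScalars_dimSubmodule R A]
  exact hCM

theorem IsSeqCM.of_retract {R M Q : Type*} [CommRing R] [IsNoetherianRing R] [IsLocalRing R]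
    [AddCommGroup M] [Module R M] [Module.Finite R M] [AddCommGroup Q] [Module R Q]
    (hM : IsSeqCM R M) {i : Q →ₗ[R] M} {p : M →ₗ[R] Q} (hpi : p ∘ₗ i = LinearMap.id) :
    IsSeqCM R Q := by
  have : Module.Finite R Q :=
    .of_surjective p (Function.RightInverse.surjective (LinearMap.congr_fun hpi))
  refine isSeqCM_iff.mpr fun d e hde ↦ ?_
  exact (isSeqCM_iff.mp hM d e hde).of_retract (dimSubquotientMap_comp_eq_id hpi d e)

end SequentiallyCohenMacaulay

theorem stmt9_general {R A M Q : Type*} [CommRing R] [IsNoetherianRing R] [IsLocalRing R]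
    [CommRing A] [IsNoetherianRing A] [IsLocalRing A] [Algebra R A] [Algebra.IsIntegral R A]
    [AddCommGroup M] [Module R M] [Module A M] [IsScalarTower R A M] [Module.Finite R M]
    [AddCommGroup Q] [Module R Q] {i : Q →ₗ[R] M} {p : M →ₗ[R] Q} (hpi : p ∘ₗ i = LinearMap.id)
    (hM : IsSeqCM A M) : IsSeqCM R Q :=
  (hM.restrictScalars R).of_retract hpi

/-- If `R` is a direct summand of `A` as an `R`-module and `A` is a
sequentially Cohen-Macaulay local ring, then so is `R`. -/
theorem stmt9 (R : Type*) [CommRing R] [IsNoetherianRing R] [IsLocalRing R]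
    (A : Type*) [CommRing A] [IsNoetherianRing A] [IsLocalRing A]
    [Algebra R A] [Module.Finite R A]
    (π : A →ₗ[R] R) (hsplit : π.comp (Algebra.linearMap R A) = LinearMap.id)
    (hA : IsSeqCMRing A) :
    IsSeqCMRing R :=
  stmt9_general hsplit hA
end
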